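/- A finitely generated group G has finitely many ends if and only if G has a Cayley graph (with respect to some finite generating set) admitting a Hamiltonian path, i.e. a path that visits every vertex exactly once (a bi-infinite such path when G is infinite, a finite one when G is finite). -/

import Mathlib

open scoped Pointwise

/-- `S` is a finite generating set of the group `G`. -/
def IsFinGenSet {G : Type*} [Group G] (S : Set G) : Prop :=
  S.Finite ∧ Subgroup.closure S = ⊤

/-- The left-invariant word-length distance associated to a generating set `S`:
`wordDist S g h` is the least `n` with `g⁻¹ * h ∈ (S ∪ S⁻¹) ^ n`. -/
noncomputable def wordDist {G : Type*} [Group G] (S : Set G) (g h : G) : ℕ :=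
  sInf {n : ℕ | g⁻¹ * h ∈ (S ∪ S⁻¹) ^ n}

/-- The word metric as a real-valued distance function. -/
noncomputable def wordMetric {G : Type*} [Group G] (S : Set G) : G → G → ℝ :=
  fun g h => (wordDist S g h : ℝ)

/-- The (right) Cayley graph of a group w.r.t. a set `S`: `g` and `gs` are adjacent
for `s ∈ S ∪ S⁻¹`. -/
def cayleyGraph {G : Type*} [Group G] (S : Set G) : SimpleGraph G :=
  SimpleGraph.fromRel (fun g h => g⁻¹ * h ∈ S ∪ S⁻¹)

/-- A Hamiltonian path in a graph: a path indexed by a subinterval of `ℤ` (consecutive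
entries adjacent) visiting every vertex exactly once. -/
def HasHamiltonianPath {V : Type*} (Γ : SimpleGraph V) : Prop :=
  ∃ (I : Set ℤ) (P : I → V), I.OrdConnected ∧ Function.Bijective P ∧
    ∀ (k : ℤ) (h₁ : k ∈ I) (h₂ : k + 1 ∈ I), Γ.Adj (P ⟨k, h₁⟩) (P ⟨k + 1, h₂⟩)

/-- The graph `Γ` has at most `m` ends: for every finite set `A` of edges, the graph
`Γ − A` has at most `m` infinite connected components. -/
def graphEndsLE {V : Type*} (Γ : SimpleGraph V) (m : ℕ) : Prop :=
  ∀ A : Finset (Sym2 V),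
    {c : (Γ.deleteEdges (A : Set (Sym2 V))).ConnectedComponent | c.supp.Infinite}.encard ≤ m

/-!
A Hamiltonian path leaves any finite set of vertices in at most two tails, so every coloring with
finite boundary has at most two infinite color classes; for colorings of a group this finiteness
does not depend on the Cayley graph, so the group has at most two ends.

Conversely, let `G` be infinite with finitely many ends. If some almost invariant coloring had
three infinite color classes, then translating it far away gives a coloring nested with it, and
combining the two gives one with a further infinite class, and so on without bound (Hopf). Hence
either `G` is one-ended or it is the union of two disjoint infinite almost invariant sets, each of
which induces a one-ended subgraph of a suitable Cayley graph. Such a subgraph has a ray that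
visits every vertex with steps of length at most three: exhaust it by finite connected pieces with
connected complement and traverse each piece by Sekanina's theorem. Two disjoint rays (in the
one-ended case the even and the odd entries of a single one) are joined at their starting points to
a sequence indexed by `ℤ`. It has finitely many different steps, and these are added to the
generating set.
-/

section ColorBoundary

variable {V κ : Type*} {X : SimpleGraph V}

theorem preconnected_iff_exists_adj_compl :
    X.Preconnected ↔ ∀ A : Set V, A.Nonempty → Aᶜ.Nonempty → ∃ a ∈ A, ∃ b ∈ Aᶜ, X.Adj a b := by
  refine ⟨fun hX A ⟨u, hu⟩ ⟨v, hv⟩ => ?_, fun h u v => by_contra fun huv => ?_⟩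
  · obtain ⟨p⟩ := hX u v
    obtain ⟨d, -, hfst, hsnd⟩ := p.exists_boundary_dart A hu hv
    exact ⟨d.fst, hfst, d.snd, hsnd, d.adj⟩
  · obtain ⟨a, ha, b, hb, hab⟩ := h {x | X.Reachable u x} ⟨u, .refl u⟩ ⟨v, huv⟩
    exact hb (SimpleGraph.Reachable.trans ha hab.reachable)

theorem preconnected_induce_iff_exists_adj_sdiff {Q : Set V} :
    (X.induce Q).Preconnected ↔
      ∀ A ⊆ Q, A.Nonempty → (Q \ A).Nonempty → ∃ a ∈ A, ∃ b ∈ Q \ A, X.Adj a b := by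
  rw [preconnected_iff_exists_adj_compl]
  constructor
  · rintro h A hA ⟨a, ha⟩ ⟨b, hbQ, hbA⟩
    obtain ⟨x, hx, y, hy, hxy⟩ := h (Subtype.val ⁻¹' A) ⟨⟨a, hA ha⟩, ha⟩ ⟨⟨b, hbQ⟩, hbA⟩
    exact ⟨x, hx, y, ⟨y.2, hy⟩, hxy⟩
  · rintro h A ⟨a, ha⟩ ⟨b, hb⟩
    obtain ⟨_, ⟨x, hx, rfl⟩, y, ⟨hyQ, hyA⟩, hxy⟩ := h ((↑) '' A) (Subtype.coe_image_subset Q A)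
      ⟨a, a, ha, rfl⟩ ⟨b, b.2, fun ⟨_, hz, hzb⟩ => hb (Subtype.ext hzb ▸ hz)⟩
    exact ⟨x, hx, ⟨y, hyQ⟩, fun hy => hyA ⟨_, hy, rfl⟩, hxy⟩

theorem preconnected_induce_of_exists_adj_of_disjoint {Q K : Set V} (hKQ : K ⊆ Q)
    (hK : (X.induce K).Preconnected) (hcut : ∀ B ⊆ Q, Disjoint B K → B.Nonempty →
      (Q \ B).Nonempty → ∃ b ∈ B, ∃ a ∈ Q \ B, X.Adj b a) : (X.induce Q).Preconnected := by
  rw [preconnected_induce_iff_exists_adj_sdiff]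
  intro A hA hne hne'
  by_cases hKA : Disjoint A K
  · exact hcut A hA hKA hne hne'
  by_cases hKA' : Disjoint (Q \ A) K
  · obtain ⟨b, hb, a, ⟨haQ, ha⟩, hba⟩ := hcut (Q \ A) Set.sdiff_subset hKA' hne'
      (by rwa [Set.sdiff_sdiff_cancel_left hA])
    exact ⟨a, by_contra fun haA => ha ⟨haQ, haA⟩, b, hb, hba.symm⟩
  · obtain ⟨a, haA, haK⟩ := Set.not_disjoint_iff.1 hKA
    obtain ⟨b, hbA, hbK⟩ := Set.not_disjoint_iff.1 hKA'
    obtain ⟨x, hx, y, hy, hxy⟩ := preconnected_induce_iff_exists_adj_sdiff.1 hK (A ∩ K)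
      Set.inter_subset_right ⟨a, haA, haK⟩ ⟨b, hbK, fun h => hbA.2 h.1⟩
    exact ⟨x, hx.1, y, ⟨hKQ hy.1, fun hyA => hy.2 ⟨hyA, hy.1⟩⟩, hxy⟩

theorem eq_of_reachable_of_forall_adj {c : V → κ} (h : ∀ x y, X.Adj x y → c x = c y) {x y : V}
    (hxy : X.Reachable x y) : c x = c y := by
  obtain ⟨p⟩ := hxy
  induction p with
  | nil => rfl
  | cons hadj _ ih => exact (h _ _ hadj).trans ih

/-- The vertices that have a neighbor of another color. For a set `E` of vertices, seen as the
coloring `(· ∈ E)`, this is the two-sided vertex boundary of `E`. -/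
def colorBoundary (X : SimpleGraph V) (c : V → κ) : Set V :=
  {x | ∃ y, X.Adj x y ∧ c x ≠ c y}

theorem finite_range_of_finite_colorBoundary (hX : X.Preconnected) {c : V → κ}
    (hc : (colorBoundary X c).Finite) : (Set.range c).Finite := by
  rcases isEmpty_or_nonempty V with _ | ⟨⟨x₀⟩⟩
  · exact Set.finite_range c
  refine ((hc.image c).insert (c x₀)).subset ?_
  rintro _ ⟨x, rfl⟩
  refine or_iff_not_imp_left.2 fun hx => ?_
  obtain ⟨a, ha, b, hb, hab⟩ :=
    preconnected_iff_exists_adj_compl.1 hX (c ⁻¹' {c x}) ⟨x, rfl⟩ ⟨x₀, Ne.symm hx⟩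
  exact ⟨a, ⟨b, hab, fun h => hb (h.symm.trans ha)⟩, ha⟩

theorem finite_colorBoundary_image_val {C : Set V} {E : Set C}
    (hC : (colorBoundary X (· ∈ C)).Finite) (hE : (colorBoundary (X.induce C) (· ∈ E)).Finite) :
    (colorBoundary X (· ∈ Subtype.val '' E)).Finite := by
  refine (hC.union (hE.image Subtype.val)).subset ?_
  rintro x ⟨y, hxy, hne⟩
  by_cases h : x ∈ C ∧ y ∈ C
  · refine .inr ⟨⟨x, h.1⟩, ⟨⟨y, h.2⟩, hxy, ?_⟩, rfl⟩
    simpa [h.1, h.2] using hne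
  · refine .inl ⟨y, hxy, fun hxy' => hne ?_⟩
    have hC' : x ∉ C ∧ y ∉ C := by
      have := iff_of_eq hxy'
      tauto
    simp [hC'.1, hC'.2]

theorem finite_colorBoundary_connectedComponentMk (X : SimpleGraph V) (A : Finset (Sym2 V)) :
    (colorBoundary X (X.deleteEdges (A : Set (Sym2 V))).connectedComponentMk).Finite := by
  classical
  refine (A.biUnion Sym2.toFinset).finite_toSet.subset ?_
  rintro x ⟨y, hxy, hne⟩
  have hA : s(x, y) ∈ A := by
    by_contra hA
    exact hne (SimpleGraph.ConnectedComponent.sound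
      (SimpleGraph.Adj.reachable (SimpleGraph.deleteEdges_adj.2 ⟨hxy, hA⟩)))
  simpa using ⟨s(x, y), hA, Sym2.mem_mk_left x y⟩

theorem exists_infinite_inter_supp (hX : X.Preconnected) (A : Finset (Sym2 V)) {D : Set V}
    (hD : D.Infinite) :
    ∃ C : (X.deleteEdges (A : Set (Sym2 V))).ConnectedComponent, (D ∩ C.supp).Infinite := by
  by_contra! h
  refine hD (((finite_range_of_finite_colorBoundary hX
    (finite_colorBoundary_connectedComponentMk X A)).biUnion fun C _ =>
      h C).subset fun x hx => ?_)
  exact Set.mem_biUnion ⟨x, rfl⟩ ⟨hx, rfl⟩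

theorem finite_setOf_edge_ne (hlf : ∀ x, (X.neighborSet x).Finite) {c : V → κ}
    (hc : (colorBoundary X c).Finite) :
    {e | ∃ x y, X.Adj x y ∧ c x ≠ c y ∧ s(x, y) = e}.Finite := by
  refine (hc.biUnion fun x _ => (hlf x).image fun y => s(x, y)).subset ?_
  rintro _ ⟨x, y, hxy, hne, rfl⟩
  exact Set.mem_biUnion ⟨y, hxy, hne⟩ ⟨y, hxy, rfl⟩

theorem card_le_of_graphEndsLE (hX : X.Preconnected) (hlf : ∀ x, (X.neighborSet x).Finite)
    {c : V → κ} (hc : (colorBoundary X c).Finite) (hinf : ∀ k, (c ⁻¹' {k}).Infinite) {m : ℕ}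
    (hm : graphEndsLE X m) : ENat.card κ ≤ m := by
  obtain ⟨A, hA⟩ := (finite_setOf_edge_ne hlf hc).exists_finset_coe
  choose C hC using fun k => exists_infinite_inter_supp hX A (hinf k)
  have hmono {x y : V} (hxy : (X.deleteEdges (A : Set (Sym2 V))).Reachable x y) : c x = c y :=
    eq_of_reachable_of_forall_adj (fun x y h => by
      obtain ⟨hadj, he⟩ := SimpleGraph.deleteEdges_adj.1 h
      exact by_contra fun hne => he (hA ▸ ⟨x, y, hadj, hne, rfl⟩)) hxy
  have hCinj : Function.Injective C := by
    intro k l hkl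
    obtain ⟨x, hxk, hxC⟩ := (hC k).nonempty
    obtain ⟨y, hyl, hyC⟩ := (hC l).nonempty
    rw [← hkl] at hyC
    exact hxk.symm.trans ((hmono ((C k).reachable_of_mem_supp hxC hyC)).trans hyl)
  calc ENat.card κ ≤ (Set.range C).encard := hCinj.encard_range
    _ ≤ {C : (X.deleteEdges (A : Set (Sym2 V))).ConnectedComponent | C.supp.Infinite}.encard :=
        Set.encard_le_encard (Set.range_subset_iff.2 fun k => (hC k).mono Set.inter_subset_right)
    _ ≤ m := hm A

end ColorBoundary

section HamiltonianPath

variable {V κ : Type*} {X : SimpleGraph V}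

theorem eq_of_forall_eq_add_one {I : Set ℤ} (hI : I.OrdConnected) {q : I → κ}
    (hq : ∀ (k : ℤ) (h₁ : k ∈ I) (h₂ : k + 1 ∈ I), q ⟨k, h₁⟩ = q ⟨k + 1, h₂⟩) (i j : I) :
    q i = q j := by
  wlog hij : i ≤ j generalizing i j
  · exact (this j i (le_of_not_ge hij)).symm
  obtain ⟨i, hi⟩ := i
  obtain ⟨j, hj⟩ := j
  change i ≤ j at hij
  induction j, hij using Int.leInduction with
  | base => rfl
  | succ j hij ih =>
    have hjI : j ∈ I := hI.out hi hj ⟨hij, by lia⟩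
    exact (ih hjI).trans (hq j hjI hj)

/-- A Hamiltonian path leaves a finite set of vertices in at most two intervals, a left one and a
right one, and away from the boundary of a coloring it never changes color. -/
theorem encard_infinite_fibers_le_two (hX : HasHamiltonianPath X) {c : V → κ}
    (hc : (colorBoundary X c).Finite) : {k | (c ⁻¹' {k}).Infinite}.encard ≤ 2 := by
  obtain ⟨I, P, hI, hP, hadj⟩ := hX
  obtain ⟨N, hN⟩ : ∃ N : ℤ, ∀ i : I, P i ∈ colorBoundary X c → |(i : ℤ)| ≤ N := by
    obtain ⟨N, hN⟩ := ((hc.preimage hP.1.injOn).image fun i : I => |(i : ℤ)|).bddAbove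
    exact ⟨N, fun i hi => hN ⟨i, hi, rfl⟩⟩
  have htail {J : Set ℤ} (hJ : J.OrdConnected) (hJN : ∀ j ∈ J, N < |j|) :
      (c ∘ P '' {i | (i : ℤ) ∈ J}).encard ≤ 1 := by
    rw [Set.encard_le_one_iff_subsingleton]
    rintro _ ⟨i, hi, rfl⟩ _ ⟨j, hj, rfl⟩
    exact eq_of_forall_eq_add_one (hI.inter hJ) (q := fun k => c (P ⟨k, k.2.1⟩))
      (fun k h₁ h₂ => by_contra fun hne => (hJN k h₁.2).not_ge
        (hN ⟨k, h₁.1⟩ ⟨_, hadj k h₁.1 h₂.1, hne⟩)) ⟨i, i.2, hi⟩ ⟨j, j.2, hj⟩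
  have hsub : {k | (c ⁻¹' {k}).Infinite} ⊆
      (c ∘ P '' {i | (i : ℤ) ∈ Set.Ioi N}) ∪ (c ∘ P '' {i | (i : ℤ) ∈ Set.Iio (-N)}) := by
    intro k hk
    have hfin : (P '' {i | |(i : ℤ)| ≤ N}).Finite := by
      refine .image _ (.preimage Subtype.val_injective.injOn (s := {i : ℤ | |i| ≤ N}) ?_)
      exact (Set.finite_Icc _ _).subset fun i hi => abs_le.1 hi
    obtain ⟨x, rfl, hx⟩ := (hk.sdiff hfin).nonempty
    obtain ⟨i, rfl⟩ := hP.2 x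
    have hi : N < |(i : ℤ)| := not_le.1 fun h => hx ⟨i, h, rfl⟩
    exact (lt_abs.1 hi).imp (fun h => ⟨i, h, rfl⟩) (fun h => ⟨i, lt_neg_of_lt_neg h, rfl⟩)
  calc _ ≤ _ := Set.encard_le_encard hsub
    _ ≤ _ := Set.encard_union_le _ _
    _ ≤ 1 + 1 := add_le_add
        (htail Set.ordConnected_Ioi fun j (hj : N < j) => lt_abs.2 (.inl hj))
        (htail Set.ordConnected_Iio fun j (hj : j < -N) => lt_abs.2 (.inr (lt_neg_of_lt_neg hj)))
    _ = 2 := one_add_one_eq_two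

end HamiltonianPath

section InducedComponent

variable {V : Type*} {X : SimpleGraph V} {U W p : Set V} {v : V}

/-- The connected component of `v` in the subgraph induced on `W`, as a set of vertices of the
ambient graph; it is empty if `v ∉ W`. -/
def inducedComponent (X : SimpleGraph V) (W : Set V) (v : V) : Set V :=
  {x | ∃ (hv : v ∈ W) (hx : x ∈ W), (X.induce W).Reachable ⟨v, hv⟩ ⟨x, hx⟩}

theorem inducedComponent_subset : inducedComponent X W v ⊆ W :=
  fun _ ⟨_, hx, _⟩ => hx

theorem mem_inducedComponent_self (hv : v ∈ W) : v ∈ inducedComponent X W v :=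
  ⟨hv, hv, .refl _⟩

theorem mem_inducedComponent_symm {x : V} (hx : x ∈ inducedComponent X W v) :
    v ∈ inducedComponent X W x :=
  let ⟨hv, hxW, h⟩ := hx
  ⟨hxW, hv, h.symm⟩

theorem mem_inducedComponent_of_adj {x y : V} (hx : x ∈ inducedComponent X W v) (hy : y ∈ W)
    (hxy : X.Adj x y) : y ∈ inducedComponent X W v :=
  let ⟨hv, hxW, h⟩ := hx
  have hadj : (X.induce W).Adj ⟨x, hxW⟩ ⟨y, hy⟩ := hxy
  ⟨hv, hy, h.trans hadj.reachable⟩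

theorem preconnected_induce_inducedComponent :
    (X.induce (inducedComponent X W v)).Preconnected := by
  rw [preconnected_induce_iff_exists_adj_sdiff]
  rintro A hA ⟨a, ha⟩ ⟨b, ⟨hv, hb, hvb⟩, hbA⟩
  obtain ⟨_, haW, hva⟩ := hA ha
  obtain ⟨p⟩ := hva.symm.trans hvb
  obtain ⟨d, -, hfst, hsnd⟩ := p.exists_boundary_dart (Subtype.val ⁻¹' A) ha hbA
  exact ⟨d.fst, hfst, d.snd, ⟨mem_inducedComponent_of_adj (hA hfst) d.snd.2 d.adj, hsnd⟩, d.adj⟩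

theorem exists_mem_inducedComponent_adj (hU : (X.induce U).Preconnected) (hpU : p ⊆ U)
    (hp : p.Nonempty) (hv : v ∈ U \ p) :
    ∃ a ∈ inducedComponent X (U \ p) v, ∃ b ∈ p, X.Adj a b := by
  obtain ⟨q, hq⟩ := hp
  obtain ⟨a, ha, b, ⟨hbU, hb⟩, hab⟩ := preconnected_induce_iff_exists_adj_sdiff.1 hU
    (inducedComponent X (U \ p) v) (inducedComponent_subset.trans Set.sdiff_subset)
    ⟨v, mem_inducedComponent_self hv⟩ ⟨q, hpU hq, fun h => (inducedComponent_subset h).2 hq⟩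
  exact ⟨a, ha, b, by_contra fun hbp => hb (mem_inducedComponent_of_adj ha ⟨hbU, hbp⟩ hab), hab⟩

theorem preconnected_induce_sdiff_inducedComponent (hU : (X.induce U).Preconnected) (hpU : p ⊆ U)
    (hp : (X.induce p).Preconnected) :
    (X.induce (U \ inducedComponent X (U \ p) v)).Preconnected := by
  set D := inducedComponent X (U \ p) v
  have hpD : p ⊆ U \ D := fun x hx => ⟨hpU hx, fun h => (inducedComponent_subset h).2 hx⟩
  refine preconnected_induce_of_exists_adj_of_disjoint hpD hp fun B hB hBp hne hne' => ?_
  obtain ⟨b, hb, a, ⟨haU, haB⟩, hba⟩ := preconnected_induce_iff_exists_adj_sdiff.1 hU B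
    (hB.trans Set.sdiff_subset) hne (hne'.mono (Set.sdiff_subset_sdiff_left Set.sdiff_subset))
  have haD : a ∉ D := fun haD => (hB hb).2 (mem_inducedComponent_of_adj haD
    ⟨(hB hb).1, Set.disjoint_left.1 hBp hb⟩ hba.symm)
  exact ⟨b, hb, a, ⟨⟨haU, haD⟩, haB⟩, hba⟩

theorem exists_infinite_inducedComponent (hlf : ∀ x, (X.neighborSet x).Finite)
    (hU : (X.induce U).Preconnected) (hinf : U.Infinite) (hpU : p ⊆ U) (hp : p.Nonempty)
    (hfin : p.Finite) : ∃ v ∈ U \ p, (inducedComponent X (U \ p) v).Infinite := by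
  by_contra! h
  refine hinf.sdiff hfin (((((hfin.biUnion fun x _ => hlf x).inter_of_left (U \ p)).biUnion
    fun v hv => h v hv.2)).subset fun x hx => ?_)
  obtain ⟨a, ha, b, hb, hab⟩ := exists_mem_inducedComponent_adj hU hpU hp hx
  exact Set.mem_biUnion ⟨Set.mem_biUnion hb hab.symm, inducedComponent_subset ha⟩
    (mem_inducedComponent_symm ha)

end InducedComponent

section CubeTour

variable {V : Type*} {X : SimpleGraph V} {Q : Set V} {u v : V}

/-- `l` lists the elements of `Q` without repetition, from `u` to `v`, with steps of length at most
three: a Hamiltonian path on `Q` in the cube of the graph `X`. -/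
structure IsCubeTour (X : SimpleGraph V) (Q : Set V) (u v : V) (l : List V) : Prop where
  nodup : l.Nodup
  mem_iff : ∀ x, x ∈ l ↔ x ∈ Q
  isChain : l.IsChain fun x y => X.dist x y ≤ 3
  head?_eq : l.head? = some u
  getLast?_eq : l.getLast? = some v

theorem isCubeTour_singleton (u : V) : IsCubeTour X {u} u u [u] where
  nodup := List.nodup_singleton u
  mem_iff := by simp
  isChain := .singleton u
  head?_eq := rfl
  getLast?_eq := rfl

theorem IsCubeTour.append {Q' : Set V} {u' v' : V} {l l' : List V} (h : IsCubeTour X Q u v l)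
    (h' : IsCubeTour X Q' u' v' l') (hQ : Disjoint Q Q') (hvu : X.dist v u' ≤ 3) :
    IsCubeTour X (Q ∪ Q') u v' (l ++ l') where
  nodup := h.nodup.append h'.nodup fun x hx hx' =>
    Set.disjoint_left.1 hQ ((h.mem_iff x).1 hx) ((h'.mem_iff x).1 hx')
  mem_iff x := by rw [List.mem_append, h.mem_iff, h'.mem_iff, Set.mem_union]
  isChain := List.isChain_append.2 ⟨h.isChain, h'.isChain, by simpa [h.getLast?_eq, h'.head?_eq]⟩
  head?_eq := by simp [h.head?_eq]
  getLast?_eq := by simp [h'.getLast?_eq]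

theorem exists_dist_le_one_of_preconnected_induce (hQ : (X.induce Q).Preconnected) (hu : u ∈ Q)
    (hv : v ∈ Q) : ∃ z ∈ Q, X.dist v z ≤ 1 ∧ (u = z → Q.Subsingleton) := by
  by_cases h : u = v ∧ ¬ Q.Subsingleton
  · obtain ⟨rfl, hne⟩ := h
    obtain ⟨w, hw, hwu⟩ := (Set.not_subsingleton_iff.1 hne).exists_ne u
    obtain ⟨_, rfl, z, ⟨hzQ, hz⟩, huz⟩ := preconnected_induce_iff_exists_adj_sdiff.1 hQ {u}
      (Set.singleton_subset_iff.2 hu) (Set.singleton_nonempty u) ⟨w, hw, hwu⟩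
    exact ⟨z, hzQ, (SimpleGraph.dist_eq_one_iff_adj.2 huz).le, fun h => (hz h.symm).elim⟩
  · exact ⟨v, hv, by simp, fun huv => by_contra fun hne => h ⟨huv, hne⟩⟩

/-- Sekanina's theorem that the cube of a finite connected graph is Hamiltonian-connected, inside a
larger connected graph. The induction splits off the component of `v` in `Q \ {u}`. -/
theorem exists_isCubeTour (hX : X.Connected) (hfin : Q.Finite) (hQ : (X.induce Q).Preconnected)
    (hu : u ∈ Q) (hv : v ∈ Q) (huv : u = v → Q.Subsingleton) : ∃ l, IsCubeTour X Q u v l := by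
  induction hn : Q.ncard using Nat.strong_induction_on generalizing Q u v with
  | _ n ih =>
  subst hn
  by_cases heq : u = v
  · obtain rfl := (huv heq).eq_singleton_of_mem hu
    exact ⟨[u], heq ▸ isCubeTour_singleton u⟩
  have huQ : {u} ⊆ Q := Set.singleton_subset_iff.2 hu
  have hvu : v ∈ Q \ {u} := ⟨hv, Ne.symm heq⟩
  set D := inducedComponent X (Q \ {u}) v
  have hDQ : D ⊆ Q := inducedComponent_subset.trans Set.sdiff_subset
  have huD : u ∉ D := fun h => (inducedComponent_subset h).2 rfl
  have hvD : v ∈ D := mem_inducedComponent_self hvu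
  have hR : (X.induce (Q \ D)).Preconnected :=
    preconnected_induce_sdiff_inducedComponent hQ huQ (by simp)
  obtain ⟨y, hyR, huy, hy⟩ := exists_dist_le_one_of_preconnected_induce hR ⟨hu, huD⟩ ⟨hu, huD⟩
  obtain ⟨w, hwD, u', hu', hwu⟩ :=
    exists_mem_inducedComponent_adj hQ huQ (Set.singleton_nonempty u) hvu
  rw [Set.eq_of_mem_singleton hu'] at hwu
  obtain ⟨z, hzD, hwz, hz⟩ :=
    exists_dist_le_one_of_preconnected_induce preconnected_induce_inducedComponent hvD hwD
  have hyz : X.dist y z ≤ 3 := by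
    have h₁ := hX.dist_triangle (u := y) (v := u) (w := z)
    have h₂ := hX.dist_triangle (u := u) (v := w) (w := z)
    rw [SimpleGraph.dist_comm] at huy
    have h₃ := SimpleGraph.dist_eq_one_iff_adj.2 hwu.symm
    lia
  obtain ⟨l, hl⟩ := ih _ (Set.ncard_lt_ncard (Set.sdiff_ssubset_left_iff.2 ⟨v, hv, hvD⟩) hfin)
    hfin.sdiff hR ⟨hu, huD⟩ hyR hy rfl
  obtain ⟨l', hl'⟩ := ih _ (Set.ncard_lt_ncard (hDQ.ssubset_of_mem_notMem hu huD) hfin)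
    (hfin.subset hDQ) preconnected_induce_inducedComponent hzD hvD (fun h => hz h.symm) rfl
  exact ⟨l ++ l', Set.sdiff_union_of_subset hDQ ▸ hl.append hl' Set.disjoint_sdiff_left hyz⟩

end CubeTour

section ListLimit

variable {V : Type*}

theorem exists_bijective_nat_of_extend_list [Countable V] [Nonempty V] {P : List V → Prop}
    {r : V → V → Prop} (hnodup : ∀ l, P l → l.Nodup) (hchain : ∀ l, P l → l.IsChain r)
    (hnil : P [])
    (hext : ∀ l, P l → ∀ w, ∃ l', P l' ∧ l <+: l' ∧ l.length < l'.length ∧ w ∈ l') :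
    ∃ f : ℕ → V, f.Bijective ∧ ∀ n, r (f n) (f (n + 1)) := by
  obtain ⟨e, he⟩ := exists_surjective_nat V
  have hext' (l : {l // P l}) (w : V) :
      ∃ l' : {l // P l}, l.1 <+: l'.1 ∧ l.1.length < l'.1.length ∧ w ∈ l'.1 :=
    let ⟨l', hl', h⟩ := hext l l.2 w
    ⟨⟨l', hl'⟩, h⟩
  choose next hinitial hlength hmem using hext'
  let L : ℕ → {l // P l} := Nat.rec ⟨[], hnil⟩ fun n l => next l (e n)
  have hmono {m n : ℕ} (hmn : m ≤ n) : (L m).1 <+: (L n).1 := by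
    induction n, hmn using Nat.le_induction with
    | base => exact List.prefix_rfl
    | succ n _ ih => exact ih.trans (hinitial (L n) (e n))
  have hlen (n : ℕ) : n ≤ (L n).1.length := by
    induction n with
    | zero => exact Nat.zero_le _
    | succ n ih => exact ih.trans_lt (hlength (L n) (e n))
  let f (n : ℕ) : V := (L (n + 1)).1[n]'(hlen (n + 1))
  have hf {m i : ℕ} (hi : i < (L m).1.length) : (L m).1[i] = f i := by
    rcases le_total m (i + 1) with h | h
    · exact (hmono h).getElem hi
    · exact ((hmono h).getElem (hlen (i + 1))).symm
  refine ⟨f, ⟨fun i j hij => ?_, fun x => ?_⟩, fun n => ?_⟩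
  · have hi := (Nat.le_max_left (i + 1) (j + 1)).trans (hlen _)
    have hj := (Nat.le_max_right (i + 1) (j + 1)).trans (hlen _)
    rw [← hf hi, ← hf hj] at hij
    exact ((hnodup _ (L _).2).getElem_inj_iff).1 hij
  · obtain ⟨n, rfl⟩ := he x
    obtain ⟨i, hi, hie⟩ := List.getElem_of_mem (hmem (L n) (e n))
    exact ⟨i, (hf (m := n + 1) hi).symm.trans hie⟩
  · have h := List.isChain_iff_getElem.1 (hchain _ (L (n + 2)).2) n (hlen (n + 2))
    rwa [hf (m := n + 2), hf (m := n + 2)] at h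

end ListLimit

section LocallyFinite

variable {V : Type*} {X : SimpleGraph V}

theorem finite_setOf_walk_length_eq (hlf : ∀ x, (X.neighborSet x).Finite) (x : V) (n : ℕ) :
    {y | ∃ p : X.Walk x y, p.length = n}.Finite := by
  induction n generalizing x with
  | zero => exact (Set.finite_singleton x).subset fun y ⟨p, hp⟩ => (p.eq_of_length_eq_zero hp).symm
  | succ n ih =>
    refine ((hlf x).biUnion fun z _ => ih z).subset ?_
    rintro y ⟨_ | ⟨hxz, p⟩, hp⟩
    · cases hp
    · exact Set.mem_biUnion hxz ⟨p, Nat.succ_injective hp⟩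

theorem countable_of_connected (hX : X.Connected) (hlf : ∀ x, (X.neighborSet x).Finite) :
    Countable V := by
  obtain ⟨x⟩ := hX.nonempty
  refine Set.countable_univ_iff.1 ((Set.countable_iUnion fun n =>
    (finite_setOf_walk_length_eq hlf x n).countable).mono fun y _ => ?_)
  obtain ⟨p⟩ := hX.preconnected x y
  exact Set.mem_iUnion.2 ⟨p.length, p, rfl⟩

end LocallyFinite

section OneEnded

variable {V : Type*} {X : SimpleGraph V}

/-- `X` has at most one end, for a connected locally finite graph `X`: a set of vertices with finite
boundary is finite or cofinite. -/
def HasAtMostOneEnd (X : SimpleGraph V) : Prop :=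
  ∀ E : Set V, (colorBoundary X (· ∈ E)).Finite → E.Finite ∨ Eᶜ.Finite

/-- An initial segment of the ray under construction. The invariant is that the complement stays
connected and can be entered from the last vertex by a step of length at most three. -/
structure IsRaySegment (X : SimpleGraph V) (l : List V) : Prop where
  nodup : l.Nodup
  isChain : l.IsChain fun x y => X.dist x y ≤ 3
  preconnected_compl : (X.induce {x | x ∉ l}).Preconnected
  exists_entry : ∃ u ∉ l, ∀ y ∈ l.getLast?, X.dist y u ≤ 3

theorem exists_finite_preconnected_induce {U : Set V} (hU : (X.induce U).Preconnected) {u : V}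
    (hu : u ∈ U) (w : V) :
    ∃ p ⊆ U, p.Finite ∧ (X.induce p).Preconnected ∧ u ∈ p ∧ (w ∈ U → w ∈ p) := by
  by_cases hw : w ∈ U
  · obtain ⟨q⟩ := hU ⟨u, hu⟩ ⟨w, hw⟩
    let q' := q.map (SimpleGraph.Embedding.induce U).toHom
    refine ⟨{x | x ∈ q'.support}, fun x hx => ?_, q'.support.finite_toSet,
      q'.connected_induce_support.preconnected, q'.start_mem_support, fun _ => q'.end_mem_support⟩
    obtain ⟨y, -, rfl⟩ := List.mem_map.1 (q.support_map _ ▸ hx)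
    exact y.2
  · exact ⟨{u}, by simpa, by simp, by simp, rfl, fun h => (hw h).elim⟩

theorem finite_compl_inducedComponent (hX : HasAtMostOneEnd X)
    (hlf : ∀ x, (X.neighborSet x).Finite) {W : Set V} (hW : Wᶜ.Finite) {v : V}
    (hv : (inducedComponent X W v).Infinite) : (inducedComponent X W v)ᶜ.Finite := by
  refine (hX _ ((hW.union (hW.biUnion fun x _ => hlf x)).subset ?_)).resolve_left hv
  rintro x ⟨y, hxy, hne⟩
  by_cases hx : x ∈ inducedComponent X W v
  · have hy : y ∉ inducedComponent X W v := fun hy => hne (by simp only [hx, hy])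
    exact .inr (Set.mem_biUnion (x := y)
      (fun hyW => hy (mem_inducedComponent_of_adj hx hyW hxy)) hxy.symm)
  · have hy : y ∈ inducedComponent X W v :=
      by_contra fun hy => hne (by simp only [hx, hy])
    exact .inl fun hxW => hx (mem_inducedComponent_of_adj hy hxW hxy.symm)

theorem IsRaySegment.append {l t : List V} {Q : Set V} {u z a : V} (hl : IsRaySegment X l)
    (hu : ∀ y ∈ l.getLast?, X.dist y u ≤ 3) (ht : IsCubeTour X Q u z t) (hQ : ∀ x ∈ Q, x ∉ l)
    (hconn : (X.induce {x | x ∉ l ++ t}).Preconnected) (ha : a ∉ l ++ t) (hza : X.dist z a ≤ 3) :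
    IsRaySegment X (l ++ t) where
  nodup := hl.nodup.append ht.nodup fun x hxl hxt => hQ x ((ht.mem_iff x).1 hxt) hxl
  isChain := List.isChain_append.2 ⟨hl.isChain, ht.isChain, by simpa [ht.head?_eq] using hu⟩
  preconnected_compl := hconn
  exists_entry := ⟨a, ha, by simpa [ht.getLast?_eq]⟩

/-- The piece is everything outside an infinite component of the complement of a finite connected
set that contains `u` and `w`. -/
theorem exists_finite_preconnected_preconnected_sdiff [Infinite V]
    (hlf : ∀ x, (X.neighborSet x).Finite) (hone : HasAtMostOneEnd X) {U : Set V}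
    (hU : (X.induce U).Preconnected) (hUfin : Uᶜ.Finite) {u : V} (hu : u ∈ U) (w : V) :
    ∃ Q ⊆ U, Q.Finite ∧ (X.induce Q).Preconnected ∧ (X.induce (U \ Q)).Preconnected ∧ u ∈ Q ∧
      (w ∈ U → w ∈ Q) ∧ ∃ b ∈ Q, ∃ a ∈ U \ Q, X.Adj b a := by
  obtain ⟨p, hpU, hpfin, hp, hup, hwp⟩ := exists_finite_preconnected_induce hU hu w
  obtain ⟨v, hv, hinf⟩ := exists_infinite_inducedComponent hlf hU
    (Set.infinite_of_finite_compl hUfin) hpU ⟨u, hup⟩ hpfin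
  have hcompl : (U \ p)ᶜ.Finite := by
    rw [Set.compl_sdiff]
    exact hpfin.union hUfin
  have hDfin := finite_compl_inducedComponent hone hlf hcompl hinf
  obtain ⟨a, ha, b, hb, hab⟩ := exists_mem_inducedComponent_adj hU hpU ⟨u, hup⟩ hv
  have hQ := preconnected_induce_sdiff_inducedComponent (v := v) hU hpU hp
  have hDU : inducedComponent X (U \ p) v ⊆ U := inducedComponent_subset.trans Set.sdiff_subset
  have hconn : (X.induce (inducedComponent X (U \ p) v)).Preconnected :=
    preconnected_induce_inducedComponent
  have hpD : ∀ x ∈ p, x ∉ inducedComponent X (U \ p) v :=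
    fun x hx h => (inducedComponent_subset h).2 hx
  refine ⟨U \ inducedComponent X (U \ p) v, Set.sdiff_subset, hDfin.subset fun x hx => hx.2, hQ, ?_⟩
  rw [Set.sdiff_sdiff_cancel_left hDU]
  exact ⟨hconn, ⟨hu, hpD u hup⟩, fun hw => ⟨hw, hpD w (hwp hw)⟩, b, ⟨hpU hb, hpD b hb⟩, a, ha,
    hab.symm⟩

theorem IsRaySegment.exists_extension [Infinite V] (hX : X.Connected)
    (hlf : ∀ x, (X.neighborSet x).Finite) (hone : HasAtMostOneEnd X) {l : List V}
    (hl : IsRaySegment X l) (w : V) :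
    ∃ l', IsRaySegment X l' ∧ l <+: l' ∧ l.length < l'.length ∧ w ∈ l' := by
  obtain ⟨u, hul, hu⟩ := hl.exists_entry
  have hfin : {x | x ∉ l}ᶜ.Finite := l.finite_toSet.subset fun x hx => not_not.1 hx
  obtain ⟨Q, hQl, hQfin, hQ, hrest, huQ, hwQ, b, hbQ, a, ⟨hal, haQ⟩, hba⟩ :=
    exists_finite_preconnected_preconnected_sdiff hlf hone hl.preconnected_compl hfin hul w
  obtain ⟨z, hzQ, hbz, huz⟩ := exists_dist_le_one_of_preconnected_induce hQ huQ hbQ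
  obtain ⟨t, ht⟩ := exists_isCubeTour hX hQfin hQ huQ hzQ huz
  have hlt : {x | x ∉ l ++ t} = {x | x ∉ l} \ Q := by
    ext x
    simp only [List.mem_append, ht.mem_iff, Set.mem_ofPred_eq, not_or, Set.mem_sdiff]
  have hza : X.dist z a ≤ 3 := by
    have htri := hX.dist_triangle (u := z) (v := b) (w := a)
    rw [SimpleGraph.dist_comm] at hbz
    have hba' := SimpleGraph.dist_eq_one_iff_adj.2 hba
    lia
  refine ⟨l ++ t, hl.append hu ht hQl (hlt ▸ hrest) (hlt.symm.subset ⟨hal, haQ⟩) hza,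
    List.prefix_append l t, ?_, ?_⟩
  · rw [List.length_append]
    exact Nat.lt_add_of_pos_right (List.length_pos_of_mem ((ht.mem_iff u).2 huQ))
  · rw [List.mem_append, or_iff_not_imp_left, ht.mem_iff]
    exact hwQ

theorem exists_bijective_nat_dist_le_three [Infinite V] (hX : X.Connected)
    (hlf : ∀ x, (X.neighborSet x).Finite) (hone : HasAtMostOneEnd X) :
    ∃ f : ℕ → V, f.Bijective ∧ ∀ n, X.dist (f n) (f (n + 1)) ≤ 3 := by
  have := countable_of_connected hX hlf
  obtain ⟨x₀⟩ := hX.nonempty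
  have hnil : IsRaySegment X [] :=
    { nodup := List.nodup_nil
      isChain := .nil
      preconnected_compl := by
        simpa [preconnected_induce_iff_exists_adj_sdiff, ← Set.compl_eq_univ_sdiff] using
          preconnected_iff_exists_adj_compl.1 hX.preconnected
      exists_entry := ⟨x₀, List.not_mem_nil, by simp⟩ }
  exact exists_bijective_nat_of_extend_list (fun _ h => h.nodup) (fun _ h => h.isChain) hnil
    fun _ hl w => hl.exists_extension hX hlf hone w

end OneEnded

section CayleyGraph

variable {G κ : Type*} [Group G] {S : Set G} {c : G → κ}

theorem cayleyGraph_adj_iff {g h : G} :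
    (cayleyGraph S).Adj g h ↔ g ≠ h ∧ g⁻¹ * h ∈ S ∪ S⁻¹ := by
  have hsymm : h⁻¹ * g ∈ S ∪ S⁻¹ ↔ g⁻¹ * h ∈ S ∪ S⁻¹ := by
    rw [Set.mem_union, Set.mem_union, Set.mem_inv, Set.mem_inv, mul_inv_rev, mul_inv_rev, inv_inv,
      inv_inv, or_comm]
  rw [cayleyGraph, SimpleGraph.fromRel_adj, hsymm, or_self]

/-- Left multiplication as a homomorphism of Cayley graphs. -/
def cayleyGraphMulLeft (S : Set G) (g : G) : cayleyGraph S →g cayleyGraph S where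
  toFun x := g * x
  map_rel' {x y} h := by
    rw [cayleyGraph_adj_iff] at h ⊢
    exact ⟨fun he => h.1 (mul_left_cancel he), by
      simpa only [mul_inv_rev, mul_assoc, inv_mul_cancel_left] using h.2⟩

theorem finite_neighborSet_cayleyGraph (hS : S.Finite) (x : G) :
    ((cayleyGraph S).neighborSet x).Finite := by
  refine ((hS.union hS.inv).image (x * ·)).subset fun y hy => ?_
  exact ⟨x⁻¹ * y, (cayleyGraph_adj_iff.1 hy).2, mul_inv_cancel_left x y⟩

theorem cayleyGraph_connected (hS : Subgroup.closure S = ⊤) : (cayleyGraph S).Connected := by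
  have hstep {g s : G} (hs : s ∈ S ∪ S⁻¹) : (cayleyGraph S).Reachable g (g * s) := by
    by_cases h : g = g * s
    · rw [← h]
    · exact (cayleyGraph_adj_iff.2 ⟨h, by rwa [inv_mul_cancel_left]⟩).reachable
  refine SimpleGraph.connected_iff_exists_forall_reachable _ |>.2 ⟨1, fun g => ?_⟩
  induction (hS ▸ Subgroup.mem_top g : g ∈ Subgroup.closure S) using
    Subgroup.closure_induction_right with
  | one => rfl
  | mul_right x _ s hs ih => exact ih.trans (hstep (.inl hs))
  | mul_inv_cancel x _ s hs ih => exact ih.trans (hstep (.inr (Set.inv_mem_inv.2 hs)))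

theorem finite_setOf_inv_mul_of_walk (hS : S.Finite) (n : ℕ) :
    {g | ∃ a b, a⁻¹ * b = g ∧ ∃ p : (cayleyGraph S).Walk a b, p.length ≤ n}.Finite := by
  refine ((Set.finite_Iic n).biUnion fun k _ =>
    finite_setOf_walk_length_eq (finite_neighborSet_cayleyGraph hS) 1 k).subset ?_
  rintro _ ⟨a, b, rfl, p, hp⟩
  have ha : cayleyGraphMulLeft S a⁻¹ a = 1 := inv_mul_cancel a
  refine Set.mem_biUnion hp ⟨(p.map (cayleyGraphMulLeft S a⁻¹)).copy ha rfl, ?_⟩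
  exact ((p.map _).length_copy ha rfl).trans (p.length_map _)

/-- An almost invariant coloring: every right translate of `c` differs from `c` at only finitely
many elements. It does not refer to a generating set, but expresses that the coloring has a finite
boundary in each Cayley graph, see `isAlmostInvariant_iff_finite_colorBoundary`. -/
def IsAlmostInvariant (c : G → κ) : Prop :=
  ∀ t, {x | c (x * t) ≠ c x}.Finite

theorem isAlmostInvariant_iff_finite_colorBoundary (hS : IsFinGenSet S) :
    IsAlmostInvariant c ↔ (colorBoundary (cayleyGraph S) c).Finite := by
  constructor
  · refine fun hc => ((hS.1.union hS.1.inv).biUnion fun t _ => hc t).subset ?_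
    rintro x ⟨y, hxy, hne⟩
    refine Set.mem_biUnion (cayleyGraph_adj_iff.1 hxy).2 ?_
    rw [Set.mem_ofPred_eq, mul_inv_cancel_left]
    exact hne.symm
  · intro hc t
    have hgen {s : G} (hs : s ∈ S ∪ S⁻¹) : {x | c (x * s) ≠ c x}.Finite :=
      hc.subset fun x hx => ⟨x * s, cayleyGraph_adj_iff.2
        ⟨fun h => hx (congrArg c h.symm), by rwa [inv_mul_cancel_left]⟩, Ne.symm hx⟩
    have hmul {x s : G} (hx : {y | c (y * x) ≠ c y}.Finite) (hs : s ∈ S ∪ S⁻¹) :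
        {y | c (y * (x * s)) ≠ c y}.Finite := by
      refine (hx.union ((hgen hs).preimage (mul_left_injective x).injOn)).subset fun y hy => ?_
      by_contra! h
      simp only [Set.mem_union, Set.mem_preimage, Set.mem_ofPred_eq, not_or, not_not] at h
      exact hy (by rw [← mul_assoc, h.2, h.1])
    induction (hS.2 ▸ Subgroup.mem_top t : t ∈ Subgroup.closure S) using
      Subgroup.closure_induction_right with
    | one => simp
    | mul_right x _ s hs ih => exact hmul ih (.inl hs)
    | mul_inv_cancel x _ s hs ih => exact hmul ih (.inr (Set.inv_mem_inv.2 hs))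

theorem IsAlmostInvariant.comp_mul_left (hc : IsAlmostInvariant c) (g : G) :
    IsAlmostInvariant fun x => c (g * x) := by
  intro t
  simp only [← mul_assoc]
  exact (hc t).preimage (mul_right_injective g).injOn

theorem IsAlmostInvariant.map₂ {κ' κ'' : Type*} {d : G → κ'} (hc : IsAlmostInvariant c)
    (hd : IsAlmostInvariant d) (F : κ → κ' → κ'') : IsAlmostInvariant fun x => F (c x) (d x) := by
  refine fun t => ((hc t).union (hd t)).subset fun x hx => ?_
  by_contra! h
  simp only [Set.mem_union, Set.mem_ofPred_eq, not_or, not_not] at h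
  exact hx (congrArg₂ F h.1 h.2)

end CayleyGraph

section EndColoring

variable {G κ : Type*} [Group G] {c : G → κ} {S : Set G}

/-- A coloring that witnesses that the group has at least as many ends as there are colors. -/
structure IsEndColoring (c : G → κ) : Prop where
  isAlmostInvariant : IsAlmostInvariant c
  infinite_fiber : ∀ k, (c ⁻¹' {k}).Infinite

theorem IsEndColoring.card_le (hS : IsFinGenSet S) (hc : IsEndColoring c) {m : ℕ}
    (hm : graphEndsLE (cayleyGraph S) m) : ENat.card κ ≤ m :=
  card_le_of_graphEndsLE (cayleyGraph_connected hS.2).preconnected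
    (finite_neighborSet_cayleyGraph hS.1)
    ((isAlmostInvariant_iff_finite_colorBoundary hS).1 hc.isAlmostInvariant) hc.infinite_fiber hm

theorem IsAlmostInvariant.exists_mul_eq [Infinite G] (hc : IsAlmostInvariant c) {K : Set G}
    (hK : K.Finite) : ∃ g, ∀ k ∈ K, c (g * k) = c g ∧ c (g⁻¹ * k) = c g⁻¹ := by
  have hbad : (⋃ k ∈ K, {g | c (g * k) ≠ c g}).Finite := hK.biUnion fun k _ => hc k
  obtain ⟨g, hg⟩ := (hbad.union hbad.inv).exists_notMem
  simp only [Set.mem_union, Set.mem_inv, Set.mem_iUnion, Set.mem_ofPred_eq, not_or, not_exists,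
    not_not] at hg
  exact ⟨g, fun k hk => ⟨hg.1 k hk, hg.2 k hk⟩⟩

/-- A translate of the coloring by an element `g` that moves the boundary far away is nested with
the coloring: all but one of the color classes of the translate lie in a single color class. -/
theorem IsEndColoring.exists_nested_translate [Infinite G] (hS : IsFinGenSet S)
    (hc : IsEndColoring c) : ∃ g i j, ∀ x, c (g⁻¹ * x) ≠ j → c x = i := by
  set K := colorBoundary (cayleyGraph S) c
  obtain ⟨g, hg⟩ := hc.isAlmostInvariant.exists_mul_eq
    ((isAlmostInvariant_iff_finite_colorBoundary hS).1 hc.isAlmostInvariant)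
  refine ⟨g, c g, c g⁻¹, fun x hxj => by_contra fun hxi => ?_⟩
  obtain ⟨z, hz⟩ := (hc.infinite_fiber (c g)).nonempty
  obtain ⟨a, ⟨haj, hai⟩, b, hb, hab⟩ := preconnected_iff_exists_adj_compl.1
    (cayleyGraph_connected hS.2).preconnected {x | c (g⁻¹ * x) ≠ c g⁻¹ ∧ c x ≠ c g}
    ⟨x, hxj, hxi⟩ ⟨z, fun h => h.2 hz⟩
  have haK : a ∉ K := fun h => haj (hg a h).2
  have hgaK : g⁻¹ * a ∉ K := fun h => hai (by rw [← (hg _ h).1, mul_inv_cancel_left])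
  refine hb ⟨?_, ?_⟩
  · rwa [← not_not.1 fun hne => hgaK ⟨g⁻¹ * b, (cayleyGraphMulLeft S g⁻¹).map_adj hab, hne⟩]
  · rwa [← not_not.1 fun hne => haK ⟨b, hab, hne⟩]

theorem IsEndColoring.exists_option [Infinite G] [Fintype κ] (hS : IsFinGenSet S)
    (hc : IsEndColoring c) (hκ : 2 < Fintype.card κ) : ∃ d : G → Option κ, IsEndColoring d := by
  classical
  obtain ⟨g, i, j, hij⟩ := hc.exists_nested_translate hS
  have hcard : 1 < (Finset.univ.erase j).card := by
    rw [Finset.card_erase_of_mem (Finset.mem_univ j), Finset.card_univ]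
    lia
  obtain ⟨j₁, hj₁, j₂, hj₂, hne⟩ := Finset.one_lt_card.1 hcard
  have htrans (k : κ) : {x | c (g⁻¹ * x) = k}.Infinite := by
    refine (Set.infinite_image_iff (mul_right_injective g⁻¹).injOn).1
      ((hc.infinite_fiber k).mono ?_)
    exact fun y hy => ⟨g * y, by simpa using hy, inv_mul_cancel_left g y⟩
  refine ⟨fun x => if c (g⁻¹ * x) = j₁ then none else some (c x),
    (hc.isAlmostInvariant.comp_mul_left g⁻¹).map₂ hc.isAlmostInvariant
      fun p q => if p = j₁ then none else some q, ?_⟩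
  rintro (_ | k)
  · exact (htrans j₁).mono fun x hx => if_pos hx
  by_cases hk : k = i
  · refine (htrans j₂).mono fun x hx => ?_
    have hx₁ : c (g⁻¹ * x) ≠ j₁ := fun h => hne (h.symm.trans hx)
    have hxi : c x = i := hij x (by rw [hx]; exact (Finset.mem_erase.1 hj₂).1)
    exact (if_neg hx₁).trans (congrArg some (hxi.trans hk.symm))
  · refine (hc.infinite_fiber k).mono fun x hx => ?_
    have hx₁ : c (g⁻¹ * x) ≠ j₁ := fun h =>
      hk (hx.symm.trans (hij x (h ▸ (Finset.mem_erase.1 hj₁).1)))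
    exact (if_neg hx₁).trans (congrArg some hx)

theorem IsEndColoring.exists_card_eq_add_three [Infinite G] (hS : IsFinGenSet S) {c : G → Fin 3}
    (hc : IsEndColoring c) (n : ℕ) :
    ∃ (κ : Type) (_ : Fintype κ) (d : G → κ), IsEndColoring d ∧ Fintype.card κ = n + 3 := by
  induction n with
  | zero => exact ⟨Fin 3, inferInstance, c, hc, rfl⟩
  | succ n ih =>
    obtain ⟨κ, _, d, hd, hκ⟩ := ih
    obtain ⟨d', hd'⟩ := hd.exists_option hS (by lia)
    exact ⟨Option κ, inferInstance, d', hd', by rw [Fintype.card_option, hκ]⟩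

/-- Hopf: an infinite group with finitely many ends has at most two. -/
theorem not_isEndColoring_of_graphEndsLE [Infinite G] (hS : IsFinGenSet S) {m : ℕ}
    (hm : graphEndsLE (cayleyGraph S) m) (c : G → Fin 3) : ¬ IsEndColoring c := by
  intro hc
  obtain ⟨κ, _, d, hd, hκ⟩ := hc.exists_card_eq_add_three hS m
  have hle := hd.card_le hS hm
  rw [ENat.card_eq_coe_fintype_card, hκ, Nat.cast_le] at hle
  lia

theorem exists_isEndColoring_fin_three {C D : Set G} (hDC : D ⊆ C)
    (hC : IsAlmostInvariant (· ∈ C)) (hD : IsAlmostInvariant (· ∈ D)) (hDinf : D.Infinite)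
    (hCDinf : (C \ D).Infinite) (hCinf : Cᶜ.Infinite) : ∃ c : G → Fin 3, IsEndColoring c := by
  classical
  refine ⟨fun x => if x ∈ D then 0 else if x ∈ C then 1 else 2,
    hC.map₂ hD fun p q => if q then 0 else if p then 1 else 2, fun k => ?_⟩
  fin_cases k
  · exact hDinf.mono fun x hx => if_pos hx
  · exact hCDinf.mono fun x hx => (if_neg hx.2).trans (if_pos hx.1)
  · exact hCinf.mono fun x (hx : x ∉ C) => (if_neg fun h => hx (hDC h)).trans (if_neg hx)

end EndColoring

section BoundedRay

variable {G : Type*} [Group G] {S C : Set G}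

/-- `C` is the vertex set of a one-way infinite path without repetitions in some locally finite
Cayley graph; the generating set is left open and only the set of steps is required to be finite. -/
def HasBoundedRay (C : Set G) : Prop :=
  ∃ f : ℕ → G, f.Injective ∧ Set.range f = C ∧ (Set.range fun n => (f n)⁻¹ * f (n + 1)).Finite

theorem IsFinGenSet.union (hS : IsFinGenSet S) {T : Set G} (hT : T.Finite) :
    IsFinGenSet (S ∪ T) :=
  ⟨hS.1.union hT, top_unique (hS.2 ▸ Subgroup.closure_mono Set.subset_union_left)⟩

theorem preconnected_induce_cayleyGraph_union (hS : Subgroup.closure S = ⊤) {K : Set G}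
    (hK : colorBoundary (cayleyGraph S) (· ∈ C) ⊆ K) :
    ((cayleyGraph (S ∪ K⁻¹ * K)).induce C).Preconnected := by
  have hclique : ((cayleyGraph (S ∪ K⁻¹ * K)).induce (C ∩ K)).Preconnected := by
    rw [preconnected_induce_iff_exists_adj_sdiff]
    rintro A hA ⟨a, ha⟩ ⟨b, hb⟩
    exact ⟨a, ha, b, hb, cayleyGraph_adj_iff.2 ⟨fun h => hb.2 (h ▸ ha),
      .inl (.inr (Set.mul_mem_mul (Set.inv_mem_inv.2 (hA ha).2) hb.1.2))⟩⟩
  refine preconnected_induce_of_exists_adj_of_disjoint Set.inter_subset_left hclique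
    fun B hBC hBK hne hne' => ?_
  obtain ⟨b, hb, a, ha, hba⟩ := preconnected_iff_exists_adj_compl.1
    (cayleyGraph_connected hS).preconnected B hne (hne'.mono fun x hx => hx.2)
  have haC : a ∈ C := by_contra fun haC => Set.disjoint_left.1 hBK hb
    ⟨hBC hb, hK ⟨a, hba, fun h => haC (h.mp (hBC hb))⟩⟩
  obtain ⟨hne, hstep⟩ := cayleyGraph_adj_iff.1 hba
  exact ⟨b, hb, a, ⟨haC, ha⟩, cayleyGraph_adj_iff.2 ⟨hne, hstep.imp (.inl ·) (.inl ·)⟩⟩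

theorem hasAtMostOneEnd_induce (hS : IsFinGenSet S) (hC : IsAlmostInvariant (· ∈ C))
    (hsplit : ∀ D ⊆ C, IsAlmostInvariant (· ∈ D) → D.Finite ∨ (C \ D).Finite) :
    HasAtMostOneEnd ((cayleyGraph S).induce C) := by
  intro E hE
  have hD := (isAlmostInvariant_iff_finite_colorBoundary hS).2 (finite_colorBoundary_image_val
    ((isAlmostInvariant_iff_finite_colorBoundary hS).1 hC) hE)
  refine (hsplit _ (Subtype.coe_image_subset C E) hD).imp
    (fun h => h.of_finite_image Subtype.val_injective.injOn) fun h => ?_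
  refine .of_finite_image (h.subset ?_) Subtype.val_injective.injOn
  rintro _ ⟨x, hx, rfl⟩
  exact ⟨x.2, fun ⟨y, hy, hyx⟩ => hx (Subtype.ext hyx ▸ hy)⟩

theorem hasBoundedRay_of_forall_finite_or_finite_sdiff (hS : IsFinGenSet S) (hCinf : C.Infinite)
    (hC : IsAlmostInvariant (· ∈ C))
    (hsplit : ∀ D ⊆ C, IsAlmostInvariant (· ∈ D) → D.Finite ∨ (C \ D).Finite) :
    HasBoundedRay C := by
  have hK := (isAlmostInvariant_iff_finite_colorBoundary hS).1 hC
  set K := colorBoundary (cayleyGraph S) (· ∈ C)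
  have hT : IsFinGenSet (S ∪ K⁻¹ * K) := hS.union (hK.inv.mul hK)
  have hconn := preconnected_induce_cayleyGraph_union hS.2 (C := C) (K := K) subset_rfl
  set T := S ∪ K⁻¹ * K
  have := hCinf.to_subtype
  have hlf (x : C) : (((cayleyGraph T).induce C).neighborSet x).Finite :=
    (finite_neighborSet_cayleyGraph hT.1 x).preimage Subtype.val_injective.injOn
  have hconnected : ((cayleyGraph T).induce C).Connected :=
    { preconnected := hconn, nonempty := hCinf.nonempty.to_subtype }
  obtain ⟨f, ⟨hinj, hsurj⟩, hf⟩ := exists_bijective_nat_dist_le_three hconnected hlf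
    (hasAtMostOneEnd_induce hT hC hsplit)
  refine ⟨fun n => f n, Subtype.val_injective.comp hinj, ?_, ?_⟩
  · rw [Set.range_comp' Subtype.val f, hsurj.range_eq, Set.image_univ, Subtype.range_coe]
  · refine (finite_setOf_inv_mul_of_walk hT.1 3).subset (Set.range_subset_iff.2 fun n => ?_)
    obtain ⟨p, hp⟩ := hconnected.exists_walk_length_eq_dist (f n) (f (n + 1))
    exact ⟨_, _, rfl, p.map (SimpleGraph.Embedding.induce C).toHom,
      (p.length_map _).trans_le (hp ▸ hf n)⟩

theorem exists_hasBoundedRay_compl_of_univ (h : HasBoundedRay (Set.univ : Set G)) :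
    ∃ C : Set G, HasBoundedRay C ∧ HasBoundedRay Cᶜ := by
  obtain ⟨f, hinj, hrange, hfin⟩ := h
  have hray {a : ℕ → ℕ} (ha : a.Injective) (hsucc : ∀ n, a (n + 1) = a n + 2) {C : Set G}
      (hC : Set.range (f ∘ a) = C) : HasBoundedRay C := by
    refine ⟨f ∘ a, hinj.comp ha, hC, (hfin.mul hfin).subset (Set.range_subset_iff.2 fun n => ?_)⟩
    refine Set.mem_mul.2 ⟨_, ⟨a n, rfl⟩, _, ⟨a n + 1, rfl⟩, ?_⟩
    simp only [Function.comp_apply, hsucc, mul_assoc, mul_inv_cancel_left]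
  refine ⟨_, hray (a := fun n => 2 * n) (fun m n h => by grind) (fun n => by ring) rfl,
    hray (a := fun n => 2 * n + 1) (fun m n h => by grind) (fun n => by ring) ?_⟩
  ext x
  obtain ⟨n, rfl⟩ : x ∈ Set.range f := hrange ▸ Set.mem_univ x
  simp only [Set.mem_compl_iff, Set.mem_range, Function.comp_apply, hinj.eq_iff]
  refine ⟨fun ⟨k, hk⟩ ⟨l, hl⟩ => by lia, fun hn => ?_⟩
  obtain ⟨k, rfl | rfl⟩ := Nat.even_or_odd' n
  · exact absurd ⟨k, rfl⟩ hn
  · exact ⟨k, rfl⟩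

theorem exists_hasBoundedRay_and_compl [Infinite G] (hS : IsFinGenSet S)
    (h : ∀ c : G → Fin 3, ¬ IsEndColoring c) : ∃ C : Set G, HasBoundedRay C ∧ HasBoundedRay Cᶜ := by
  by_cases hC : ∃ C : Set G, IsAlmostInvariant (· ∈ C) ∧ C.Infinite ∧ Cᶜ.Infinite
  · obtain ⟨C, hC, hCinf, hCinf'⟩ := hC
    have hray {C : Set G} (hC : IsAlmostInvariant (· ∈ C)) (hCinf : C.Infinite)
        (hCinf' : Cᶜ.Infinite) : HasBoundedRay C :=
      hasBoundedRay_of_forall_finite_or_finite_sdiff hS hCinf hC fun D hDC hD => by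
        by_contra! hD'
        obtain ⟨c, hc⟩ := exists_isEndColoring_fin_three hDC hC hD hD'.1 hD'.2 hCinf'
        exact h c hc
    exact ⟨C, hray hC hCinf hCinf',
      hray (hC.map₂ hC fun p _ => ¬ p) hCinf' (by rwa [compl_compl])⟩
  · refine exists_hasBoundedRay_compl_of_univ (hasBoundedRay_of_forall_finite_or_finite_sdiff hS
      Set.infinite_univ (fun t => by simp) fun D _ hD => ?_)
    rw [← Set.compl_eq_univ_sdiff]
    by_contra! hD'
    exact hC ⟨D, hD, hD'⟩

end BoundedRay

section HamiltonianCayleyGraph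

variable {G : Type*} [Group G]

theorem HasBoundedRay.exists_bijective_int {C : Set G} (h : HasBoundedRay C)
    (h' : HasBoundedRay Cᶜ) :
    ∃ P : ℤ → G, P.Bijective ∧ (Set.range fun k => (P k)⁻¹ * P (k + 1)).Finite := by
  obtain ⟨f, hf, hrange, hfin⟩ := h
  obtain ⟨f', hf', hrange', hfin'⟩ := h'
  have hne (m n : ℕ) : f m ≠ f' n := fun h =>
    (hrange' ▸ Set.mem_range_self n : f' n ∈ Cᶜ) (hrange ▸ h ▸ Set.mem_range_self m)
  have hsurj : (Sum.elim f f').Surjective := by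
    rw [← Set.range_eq_univ, Set.Sum.elim_range, hrange, hrange', Set.union_compl_self]
  refine ⟨Sum.elim f f' ∘ Equiv.intEquivNatSumNat,
    .comp ⟨hf.sumElim hf' hne, hsurj⟩ Equiv.intEquivNatSumNat.bijective, ?_⟩
  refine ((hfin.union hfin'.inv).union (Set.finite_singleton ((f' 0)⁻¹ * f 0))).subset ?_
  rintro _ ⟨n | _ | n, rfl⟩
  · exact .inl (.inl ⟨n, rfl⟩)
  · exact .inr rfl
  · refine .inl (.inr ⟨n, ?_⟩)
    rw [mul_inv_rev, inv_inv]
    rfl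

theorem exists_hasHamiltonianPath_of_bijective_int {S : Set G} (hS : IsFinGenSet S) {P : ℤ → G}
    (hP : P.Bijective) (hfin : (Set.range fun k => (P k)⁻¹ * P (k + 1)).Finite) :
    ∃ T : Set G, IsFinGenSet T ∧ HasHamiltonianPath (cayleyGraph T) := by
  refine ⟨_, hS.union hfin, Set.univ, fun k => P k, Set.ordConnected_univ,
    hP.comp (Equiv.Set.univ ℤ).bijective, fun k _ _ => cayleyGraph_adj_iff.2 ⟨fun h => ?_, ?_⟩⟩
  · exact (lt_add_one k).ne (hP.1 h)
  · exact .inl (.inr ⟨k, rfl⟩)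

theorem hasHamiltonianPath_top {V : Type*} [Finite V] : HasHamiltonianPath (⊤ : SimpleGraph V) := by
  obtain ⟨n, ⟨e⟩⟩ := Finite.exists_equiv_fin V
  have hlt (k : Set.Ico 0 (n : ℤ)) : (k : ℤ).toNat < n := (Int.toNat_lt k.2.1).2 k.2.2
  have hinj : Function.Injective fun k : Set.Ico 0 (n : ℤ) => e.symm ⟨(k : ℤ).toNat, hlt k⟩ := by
    intro a b hab
    have hab' : (a : ℤ).toNat = (b : ℤ).toNat := Fin.ext_iff.1 (e.symm.injective hab)
    exact Subtype.ext (by rw [← Int.toNat_of_nonneg a.2.1, hab', Int.toNat_of_nonneg b.2.1])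
  refine ⟨Set.Ico 0 n, _, Set.ordConnected_Ico, ⟨hinj, fun x => ?_⟩, fun k h₁ h₂ => ?_⟩
  · exact ⟨⟨(e x : ℕ), Int.natCast_nonneg _, Nat.cast_lt.2 (e x).2⟩, by simp⟩
  · exact (SimpleGraph.top_adj _ _).2 fun h => (lt_add_one k).ne (congrArg Subtype.val (hinj h))

theorem cayleyGraph_univ : cayleyGraph (Set.univ : Set G) = ⊤ := by
  ext g h
  rw [cayleyGraph_adj_iff, SimpleGraph.top_adj, Set.univ_union, and_iff_left (Set.mem_univ _)]

end HamiltonianCayleyGraph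

/-- A finitely generated group has finitely many ends if and only if it has a Cayley graph
(w.r.t. some finite generating set) admitting a Hamiltonian path. -/
theorem finitely_many_ends_iff_cayley_hamiltonian_path
    (G : Type*) [Group G] [Group.FG G] :
    (∃ m : ℕ, ∀ S : Set G, IsFinGenSet S → graphEndsLE (cayleyGraph S) m) ↔
    (∃ S : Set G, IsFinGenSet S ∧ HasHamiltonianPath (cayleyGraph S)) := by
  constructor
  · rintro ⟨m, hm⟩
    obtain ⟨S, hgen, hfin⟩ := Group.fg_iff.1 ‹Group.FG G›
    have hS : IsFinGenSet S := ⟨hfin, hgen⟩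
    rcases finite_or_infinite G with _ | _
    · exact ⟨Set.univ, ⟨Set.finite_univ, Subgroup.closure_univ⟩,
        cayleyGraph_univ (G := G) ▸ hasHamiltonianPath_top⟩
    · obtain ⟨C, hC, hC'⟩ :=
        exists_hasBoundedRay_and_compl hS (not_isEndColoring_of_graphEndsLE hS (hm S hS))
      obtain ⟨P, hP, hsteps⟩ := hC.exists_bijective_int hC'
      exact exists_hasHamiltonianPath_of_bijective_int hS hP hsteps
  · rintro ⟨S, hS, hpath⟩
    refine ⟨2, fun T hT A => encard_infinite_fibers_le_two hpath ?_⟩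
    exact (isAlmostInvariant_iff_finite_colorBoundary hS).1
      ((isAlmostInvariant_iff_finite_colorBoundary hT).2
        (finite_colorBoundary_connectedComponentMk (cayleyGraph T) A))
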